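/- arXiv:1310.7811 — 4 statements merged into one kernel-verified Lean document; each statement's English description precedes it below -/
import Mathlib

section
/- Let ρ ∈ (0,1) and α, h ∈ ℝ. Let (c_n)_{n≥0} be a real sequence whose power series ∑_{n=0}^∞ c_n ξ^n converges on (−r, r) for some r ∈ (0, 1], and suppose y(ξ) := ξ^{1/2} ∑_{n=0}^∞ c_n ξ^n satisfies the Lamé equation in Weierstrass's form with parameters (ρ, α, h) at every ξ ∈ (0, r). Then, with the convention c_{−1} := 0, for every n ≥ 0: 2ρ⁻²(n+1)(2n+3) c_{n+1} = ( 4(1+ρ⁻²)(n+1/2)² − hρ⁻² ) c_n + ( α(α+1) − 2n(2n−1) ) c_{n−1}. -/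
/-- `y` satisfies the Lamé equation in Weierstrass's form with parameters `(ρ, α, h)`
at the point `ξ`. -/
def SatisfiesLame (ρ α h : ℝ) (y : ℝ → ℝ) (ξ : ℝ) : Prop :=
  deriv (deriv y) ξ
    + (1 / 2) * (1 / ξ + 1 / (ξ - 1) + 1 / (ξ - (ρ ^ 2)⁻¹)) * deriv y ξ
    + (-(α * (α + 1)) * ξ + h * (ρ ^ 2)⁻¹) / (4 * ξ * (ξ - 1) * (ξ - (ρ ^ 2)⁻¹)) * y ξ = 0

/-!
Let `θ = ξ d/dξ` be the Euler operator and `a = ρ⁻²`. Multiplying the Lamé equation by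
`4 ξ² (ξ - 1) (ξ - a)` brings it to the form
`ξ² (4 θ² + 2 θ - α (α + 1)) y - ξ (4 (1 + a) θ² - h a) y + a (4 θ² - 2 θ) y = 0`.
Substituting `y = ξ ^ s g` replaces `θ` by `θ + s`, which acts on the coefficients of a power
series as multiplication by `n + s`. The coefficient of `ξ ^ (n + 1)` is then the three-term
recurrence.
-/

open Filter Topology
open FormalMultilinearSeries (ofScalars coeff_ofScalars ofScalars_series_eq_zero
  apply_eq_pow_smul_coeff)

section PowerSeries

variable {𝕜 : Type*} [NontriviallyNormedField 𝕜] {f g : 𝕜 → 𝕜} {c d : ℕ → 𝕜}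

/-- `∑ c n * z ^ n` converges to `f z` for all `z` near `0`. This is
`HasFPowerSeriesAt f (ofScalars 𝕜 c) 0`, phrased so that linear operations act on the coefficient
sequence. -/
def HasPowerSeriesAtZero (f : 𝕜 → 𝕜) (c : ℕ → 𝕜) : Prop :=
  ∀ᶠ z in 𝓝 0, HasSum (fun n ↦ c n * z ^ n) (f z)

/-- The coefficient sequence of `z * ∑ c n * z ^ n`, i.e. `n ↦ c (n - 1)` with the convention
`c (-1) = 0`. -/
def shiftCoeff {R : Type*} [Zero R] (c : ℕ → R) (n : ℕ) : R :=
  if n = 0 then 0 else c (n - 1)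

/-- The operator `z d/dz + s`, which is the conjugate of the Euler operator `eulerOp 0 = z d/dz`
by multiplication by `z ^ s`. -/
noncomputable def eulerOp (s : 𝕜) (f : 𝕜 → 𝕜) (z : 𝕜) : 𝕜 :=
  z * deriv f z + s * f z

theorem shiftCoeff_succ {R : Type*} [Zero R] (c : ℕ → R) (n : ℕ) : shiftCoeff c (n + 1) = c n := by
  simp [shiftCoeff]

theorem hasPowerSeriesAtZero_iff_hasFPowerSeriesAt :
    HasPowerSeriesAtZero f c ↔ HasFPowerSeriesAt f (ofScalars 𝕜 c) 0 := by
  simp [HasPowerSeriesAtZero, hasFPowerSeriesAt_iff, coeff_ofScalars, mul_comm]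

namespace HasPowerSeriesAtZero

theorem congr_coeff (hf : HasPowerSeriesAtZero f c) (h : ∀ n, c n = d n) :
    HasPowerSeriesAtZero f d :=
  funext h ▸ hf

theorem add (hf : HasPowerSeriesAtZero f c) (hg : HasPowerSeriesAtZero g d) :
    HasPowerSeriesAtZero (f + g) (c + d) := by
  filter_upwards [hf, hg] with z hfz hgz
  simpa [add_mul] using hfz.add hgz

theorem sub (hf : HasPowerSeriesAtZero f c) (hg : HasPowerSeriesAtZero g d) :
    HasPowerSeriesAtZero (f - g) (c - d) := by
  filter_upwards [hf, hg] with z hfz hgz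
  simpa [sub_mul] using hfz.sub hgz

theorem const_smul (a : 𝕜) (hf : HasPowerSeriesAtZero f c) :
    HasPowerSeriesAtZero (a • f) (a • c) := by
  filter_upwards [hf] with z hfz
  simpa [mul_assoc] using hfz.mul_left a

theorem id_mul (hf : HasPowerSeriesAtZero f c) :
    HasPowerSeriesAtZero (id * f) (shiftCoeff c) := by
  filter_upwards [hf] with z hfz
  rw [← hasSum_nat_add_iff' 1]
  simpa [shiftCoeff, pow_succ', mul_left_comm] using hfz.mul_left z

theorem analyticAt (hf : HasPowerSeriesAtZero f c) : AnalyticAt 𝕜 f 0 :=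
  (hasPowerSeriesAtZero_iff_hasFPowerSeriesAt.1 hf).analyticAt

protected theorem deriv [CompleteSpace 𝕜] (hf : HasPowerSeriesAtZero f c) :
    HasPowerSeriesAtZero (deriv f) (fun n ↦ (n + 1) * c (n + 1)) := by
  obtain ⟨r, hr⟩ := hasPowerSeriesAtZero_iff_hasFPowerSeriesAt.1 hf
  have hf' := ((ContinuousLinearMap.apply 𝕜 𝕜 (1 : 𝕜)).comp_hasFPowerSeriesOnBall
    hr.fderiv).hasFPowerSeriesAt.eventually_hasSum
  filter_upwards [hf'] with z hz
  simpa [apply_eq_pow_smul_coeff, coeff_ofScalars, mul_comm] using hz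

protected theorem eulerOp [CompleteSpace 𝕜] (s : 𝕜) (hf : HasPowerSeriesAtZero f c) :
    HasPowerSeriesAtZero (eulerOp s f) (fun n ↦ (n + s) * c n) := by
  refine (hf.deriv.id_mul.add (hf.const_smul s)).congr_coeff fun n ↦ ?_
  cases n <;> simp [shiftCoeff, add_mul]

theorem coeff_eq_zero_of_frequently (hf : HasPowerSeriesAtZero f c)
    (hf₀ : ∃ᶠ z in 𝓝[≠] 0, f z = 0) : c = 0 := by
  have hf_zero : f =ᶠ[𝓝 0] 0 := hf.analyticAt.frequently_zero_iff_eventually_zero.1 hf₀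
  have hf_series := hasPowerSeriesAtZero_iff_hasFPowerSeriesAt.1 hf
  exact (ofScalars_series_eq_zero 𝕜).1 (hf_series.eq_zero_of_eventually hf_zero)

end HasPowerSeriesAtZero

theorem eulerOp_zero (f : 𝕜 → 𝕜) : eulerOp 0 f = fun z ↦ z * deriv f z := by
  ext z
  simp [eulerOp]

theorem eulerOp_congr_of_eventuallyEq (s : 𝕜) {z : 𝕜} (h : f =ᶠ[𝓝 z] g) :
    eulerOp s f z = eulerOp s g z := by
  rw [eulerOp, eulerOp, h.deriv_eq, h.eq_of_nhds]

theorem eulerOp_zero_eulerOp_zero {z : 𝕜} (hf : DifferentiableAt 𝕜 (deriv f) z) :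
    eulerOp 0 (eulerOp 0 f) z = z * deriv f z + z ^ 2 * deriv (deriv f) z := by
  have h : HasDerivAt (fun x ↦ x * deriv f x) (1 * deriv f z + z * deriv (deriv f) z) z :=
    (hasDerivAt_id z).fun_mul hf.hasDerivAt
  simp only [eulerOp_zero, h.deriv]
  ring

end PowerSeries

section Rpow

variable {g : ℝ → ℝ} {ξ : ℝ}

theorem eulerOp_zero_rpow_mul (s : ℝ) (hg : DifferentiableAt ℝ g ξ) (hξ : 0 < ξ) :
    eulerOp 0 (fun x ↦ x ^ s * g x) ξ = ξ ^ s * eulerOp s g ξ := by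
  have h := (Real.hasDerivAt_rpow_const (p := s) (Or.inl hξ.ne')).fun_mul hg.hasDerivAt
  rw [eulerOp, eulerOp, h.deriv, Real.rpow_sub_one hξ.ne']
  field_simp
  ring

theorem eulerOp_zero_eulerOp_zero_rpow_mul (s : ℝ) (hg : AnalyticAt ℝ g ξ) (hξ : 0 < ξ) :
    eulerOp 0 (eulerOp 0 fun x ↦ x ^ s * g x) ξ = ξ ^ s * eulerOp s (eulerOp s g) ξ := by
  have h : eulerOp 0 (fun x ↦ x ^ s * g x) =ᶠ[𝓝 ξ] fun x ↦ x ^ s * eulerOp s g x := by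
    filter_upwards [hg.eventually_analyticAt, lt_mem_nhds hξ] with x hgx hx
    exact eulerOp_zero_rpow_mul s hgx.differentiableAt hx
  have hg' : AnalyticAt ℝ (eulerOp s g) ξ := by unfold eulerOp; fun_prop
  rw [eulerOp_congr_of_eventuallyEq 0 h, eulerOp_zero_rpow_mul s hg'.differentiableAt hξ]

theorem analyticAt_rpow_mul (s : ℝ) (hg : AnalyticAt ℝ g ξ) (hξ : ξ ≠ 0) :
    AnalyticAt ℝ (fun x ↦ x ^ s * g x) ξ :=
  (Real.contDiffAt_rpow_const_of_ne hξ).analyticAt.fun_mul hg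

end Rpow

section Lame

/-- The operator `4 ξ² (ξ - 1) (ξ - a) L` conjugated by multiplication by `ξ ^ s`, where `L` is the
left-hand side of the Lamé equation and `a = ρ⁻²`. The outer factors `ξ` are kept separate, so that
on power series each of them shifts the coefficients. -/
noncomputable def lameEulerOp (ρ α h s : ℝ) (g : ℝ → ℝ) (ξ : ℝ) : ℝ :=
  ξ * (ξ * (4 * eulerOp s (eulerOp s g) ξ + 2 * eulerOp s g ξ - α * (α + 1) * g ξ))
    - ξ * (4 * (1 + (ρ ^ 2)⁻¹) * eulerOp s (eulerOp s g) ξ - h * (ρ ^ 2)⁻¹ * g ξ)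
    + (ρ ^ 2)⁻¹ * (4 * eulerOp s (eulerOp s g) ξ - 2 * eulerOp s g ξ)

variable {ρ α h s ξ : ℝ} {c : ℕ → ℝ} {g y : ℝ → ℝ}

theorem satisfiesLame_iff_lameEulerOp_zero_eq_zero (hξ₀ : ξ ≠ 0) (hξ₁ : ξ ≠ 1)
    (hξρ : ξ ≠ (ρ ^ 2)⁻¹) (hy : DifferentiableAt ℝ (deriv y) ξ) :
    SatisfiesLame ρ α h y ξ ↔ lameEulerOp ρ α h 0 y ξ = 0 := by
  rw [SatisfiesLame, lameEulerOp, eulerOp_zero_eulerOp_zero hy, eulerOp]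
  generalize (ρ ^ 2)⁻¹ = a at *
  have hξ₁' : ξ - 1 ≠ 0 := sub_ne_zero.2 hξ₁
  have hξa : ξ - a ≠ 0 := sub_ne_zero.2 hξρ
  have hfactor : 4 * ξ ^ 2 * (ξ - 1) * (ξ - a) ≠ 0 := by positivity
  rw [← mul_eq_zero_iff_left hfactor]
  congr! 1
  field_simp
  ring

theorem lameEulerOp_zero_rpow_mul (hg : AnalyticAt ℝ g ξ) (hξ : 0 < ξ) :
    lameEulerOp ρ α h 0 (fun x ↦ x ^ s * g x) ξ = ξ ^ s * lameEulerOp ρ α h s g ξ := by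
  rw [lameEulerOp, lameEulerOp, eulerOp_zero_eulerOp_zero_rpow_mul s hg hξ,
    eulerOp_zero_rpow_mul s hg.differentiableAt hξ]
  ring

theorem SatisfiesLame.lameEulerOp_eq_zero
    (hy : SatisfiesLame ρ α h (fun x ↦ x ^ s * g x) ξ) (hg : AnalyticAt ℝ g ξ) (hξ₀ : 0 < ξ)
    (hξ₁ : ξ ≠ 1) (hξρ : ξ ≠ (ρ ^ 2)⁻¹) : lameEulerOp ρ α h s g ξ = 0 := by
  have hy' := (analyticAt_rpow_mul s hg hξ₀.ne').deriv.differentiableAt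
  rw [satisfiesLame_iff_lameEulerOp_zero_eq_zero hξ₀.ne' hξ₁ hξρ hy',
    lameEulerOp_zero_rpow_mul hg hξ₀] at hy
  exact (mul_eq_zero_iff_left (Real.rpow_pos_of_pos hξ₀ s).ne').1 hy

protected theorem HasPowerSeriesAtZero.lameEulerOp (hg : HasPowerSeriesAtZero g c) :
    HasPowerSeriesAtZero (lameEulerOp ρ α h s g)
      (shiftCoeff (shiftCoeff fun n ↦ (2 * (n + s) * (2 * (n + s) + 1) - α * (α + 1)) * c n)
        - shiftCoeff (fun n ↦ (4 * (1 + (ρ ^ 2)⁻¹) * (n + s) ^ 2 - h * (ρ ^ 2)⁻¹) * c n)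
        + fun n ↦ (ρ ^ 2)⁻¹ * (2 * (n + s)) * (2 * (n + s) - 1) * c n) := by
  have hg₁ := hg.eulerOp s
  have hg₂ := hg₁.eulerOp s
  have hquad := (((hg₂.const_smul 4).add (hg₁.const_smul 2)).sub
    (hg.const_smul (α * (α + 1)))).congr_coeff
      (d := fun n ↦ (2 * (n + s) * (2 * (n + s) + 1) - α * (α + 1)) * c n) fun n ↦ by
    simp only [Pi.add_apply, Pi.sub_apply, Pi.smul_apply, smul_eq_mul]; ring
  have hlin := ((hg₂.const_smul (4 * (1 + (ρ ^ 2)⁻¹))).sub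
    (hg.const_smul (h * (ρ ^ 2)⁻¹))).congr_coeff
      (d := fun n ↦ (4 * (1 + (ρ ^ 2)⁻¹) * (n + s) ^ 2 - h * (ρ ^ 2)⁻¹) * c n) fun n ↦ by
    simp only [Pi.sub_apply, Pi.smul_apply, smul_eq_mul]; ring
  have hconst := (((hg₂.const_smul 4).sub (hg₁.const_smul 2)).const_smul (ρ ^ 2)⁻¹).congr_coeff
      (d := fun n ↦ (ρ ^ 2)⁻¹ * (2 * (n + s)) * (2 * (n + s) - 1) * c n) fun n ↦ by
    simp only [Pi.sub_apply, Pi.smul_apply, smul_eq_mul]; ring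
  exact (hquad.id_mul.id_mul.sub hlin.id_mul).add hconst

theorem lame_three_term_recurrence_exponent_half_general (hρ : ρ ≠ 0)
    (hg : ∀ᶠ ξ in 𝓝 0, HasSum (fun n : ℕ ↦ c n * ξ ^ n) (g ξ))
    (heq : ∀ᶠ ξ in 𝓝[>] 0, SatisfiesLame ρ α h (fun ξ ↦ ξ ^ s * g ξ) ξ) (n : ℕ) :
    (ρ ^ 2)⁻¹ * (2 * (n + 1 + s)) * (2 * (n + 1 + s) - 1) * c (n + 1)
      = (4 * (1 + (ρ ^ 2)⁻¹) * (n + s) ^ 2 - h * (ρ ^ 2)⁻¹) * c n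
        + (α * (α + 1) - 2 * (n - 1 + s) * (2 * (n - 1 + s) + 1))
            * (if n = 0 then 0 else c (n - 1)) := by
  have hseries : HasPowerSeriesAtZero g c := hg
  have hρ' : (ρ ^ 2)⁻¹ ≠ 0 := by positivity
  have hzero : ∀ᶠ ξ in 𝓝[>] 0, lameEulerOp ρ α h s g ξ = 0 := by
    filter_upwards [heq, self_mem_nhdsWithin, nhdsWithin_le_nhds (eventually_ne_nhds zero_ne_one),
      nhdsWithin_le_nhds (eventually_ne_nhds hρ'.symm),
      nhdsWithin_le_nhds hseries.analyticAt.eventually_analyticAt] with ξ hξ hξ₀ hξ₁ hξρ hgξ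
    exact hξ.lameEulerOp_eq_zero hgξ hξ₀ hξ₁ hξρ
  have hcoeff := congrFun (hseries.lameEulerOp.coeff_eq_zero_of_frequently
    (hzero.frequently.filter_mono (nhdsGT_le_nhdsNE 0))) (n + 1)
  simp only [Pi.add_apply, Pi.sub_apply, Pi.zero_apply, shiftCoeff_succ] at hcoeff
  cases n with
  | zero =>
    simp only [shiftCoeff, if_true, Nat.cast_zero, Nat.cast_add, Nat.cast_one] at hcoeff ⊢
    linear_combination hcoeff
  | succ n =>
    simp only [shiftCoeff_succ, Nat.succ_ne_zero, if_false, Nat.add_sub_cancel, Nat.cast_add,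
      Nat.cast_one] at hcoeff ⊢
    linear_combination hcoeff

end Lame

theorem lame_three_term_recurrence_exponent_half
    (ρ α h : ℝ) (hρ : ρ ∈ Set.Ioo (0 : ℝ) 1)
    (c : ℕ → ℝ) (r : ℝ) (hr : 0 < r) (hr1 : r ≤ 1)
    (g : ℝ → ℝ)
    (hg : ∀ ξ ∈ Set.Ioo (-r) r, HasSum (fun n : ℕ => c n * ξ ^ n) (g ξ))
    (heq : ∀ ξ ∈ Set.Ioo (0 : ℝ) r,
      SatisfiesLame ρ α h (fun ξ => Real.sqrt ξ * g ξ) ξ) :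
    ∀ n : ℕ,
      2 * (ρ ^ 2)⁻¹ * ((n : ℝ) + 1) * (2 * (n : ℝ) + 3) * c (n + 1)
        = (4 * (1 + (ρ ^ 2)⁻¹) * ((n : ℝ) + 1 / 2) ^ 2 - h * (ρ ^ 2)⁻¹) * c n
          + (α * (α + 1) - 2 * (n : ℝ) * (2 * (n : ℝ) - 1))
              * (if n = 0 then 0 else c (n - 1)) := by
  intro n
  simp only [Real.sqrt_eq_rpow] at heq
  linear_combination lame_three_term_recurrence_exponent_half_general hρ.1.ne'
    (eventually_of_mem (Ioo_mem_nhds (neg_neg_of_pos hr) hr) hg)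
    (eventually_of_mem (Ioo_mem_nhdsGT hr) heq) n
end

section
/- Let a, q, α, β, γ, δ ∈ ℝ with a ∉ {0,1}, set ε := α + β − γ − δ + 1, and let I be an open interval with I ⊆ (0,1) \ {a}. Suppose v : ℝ → ℝ is twice differentiable on J := {1 − x : x ∈ I} and satisfies Heun's differential equation with parameters (1 − a, −q + (δ−1)γa + (α−δ+1)(β−δ+1), α − δ + 1, β − δ + 1, 2 − δ, γ) at every point of J. Then u(x) := (1−x)^{1−δ} · v(1 − x) satisfies Heun's differential equation with parameters (a, q, α, β, γ, δ) at every x ∈ I. -/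
/-- `y` satisfies Heun's differential equation with parameters `(a, q, α, β, γ, δ)`
(and `ε := α + β - γ - δ + 1`) at the point `x`. -/
def SatisfiesHeun (a q α β γ δ : ℝ) (y : ℝ → ℝ) (x : ℝ) : Prop :=
  deriv (deriv y) x
    + (γ / x + δ / (x - 1) + (α + β - γ - δ + 1) / (x - a)) * deriv y x
    + (α * β * x - q) / (x * (x - 1) * (x - a)) * y x = 0

/-!
The substitution splits into two classical symmetries of Heun's equation. The reflection
`x ↦ 1 - x` exchanges the singularities `0` and `1`, hence `γ` and `δ`, and moves `a` to `1 - a`.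
Conjugation by `x ^ s` creates a double pole at `0` with coefficient `s * (s - 1) + γ * s`, which
vanishes for the second exponent `s = 1 - γ`; the result is a Heun equation with `γ` replaced by
`2 - γ`. Applying this at `0` to the reflected equation and reflecting back gives the
corresponding change of exponents at `1`.
-/

open Filter Topology

section RpowMul

variable {s x : ℝ} {v : ℝ → ℝ}

theorem deriv_rpow_mul (hx : x ≠ 0) (hv : DifferentiableAt ℝ v x) :
    deriv (fun t => t ^ s * v t) x = x ^ s * (deriv v x + s / x * v x) := by
  have hpow : HasDerivAt (fun t : ℝ => t ^ s) (s * x ^ (s - 1)) x :=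
    Real.hasDerivAt_rpow_const (Or.inl hx)
  rw [(hpow.fun_mul hv.hasDerivAt).deriv, Real.rpow_sub_one hx]
  ring

theorem deriv_deriv_rpow_mul (hx : x ≠ 0) (hv : ∀ᶠ t in 𝓝 x, DifferentiableAt ℝ v t)
    (hv' : DifferentiableAt ℝ (deriv v) x) :
    deriv (deriv fun t => t ^ s * v t) x =
      x ^ s * (deriv (deriv v) x + 2 * s / x * deriv v x + s * (s - 1) / x ^ 2 * v x) := by
  have hderiv : deriv (fun t => t ^ s * v t) =ᶠ[𝓝 x]
      fun t => t ^ s * (deriv v t + s / t * v t) := by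
    filter_upwards [hv, eventually_ne_nhds hx] with t htv ht using deriv_rpow_mul ht htv
  have hdiv : HasDerivAt (fun t => s / t) (-s / x ^ 2) x := by
    simpa using (hasDerivAt_const x s).fun_div (hasDerivAt_id x) hx
  have hfactor := hv'.hasDerivAt.fun_add (hdiv.fun_mul hv.self_of_nhds.hasDerivAt)
  rw [hderiv.deriv_eq, deriv_rpow_mul hx hfactor.differentiableAt, hfactor.deriv]
  ring

end RpowMul

section Symmetries

variable {a q α β γ δ x : ℝ} {v : ℝ → ℝ}

theorem satisfiesHeun_comp_one_sub_iff :
    SatisfiesHeun a q α β γ δ (fun t => v (1 - t)) x ↔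
      SatisfiesHeun (1 - a) (α * β - q) α β δ γ v (1 - x) := by
  have hderiv : deriv (fun t => v (1 - t)) = fun t => -deriv v (1 - t) :=
    funext (deriv_comp_const_sub v 1)
  have hderiv₂ : deriv (deriv fun t => v (1 - t)) x = deriv (deriv v) (1 - x) := by
    rw [hderiv, deriv.fun_neg, deriv_comp_const_sub, neg_neg]
  have hfirst : δ / (1 - x) + γ / (1 - x - 1) + (α + β - δ - γ + 1) / (1 - x - (1 - a)) =
      -(γ / x + δ / (x - 1) + (α + β - γ - δ + 1) / (x - a)) := by
    have hpole₁ : 1 - x - 1 = -x := by ring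
    have hpole₀ : 1 - x = -(x - 1) := by ring
    have hpoleₐ : 1 - x - (1 - a) = -(x - a) := by ring
    rw [hpole₁, hpoleₐ, hpole₀, div_neg, div_neg, div_neg]
    ring
  have hzeroth : (α * β * (1 - x) - (α * β - q)) / ((1 - x) * (1 - x - 1) * (1 - x - (1 - a))) =
      (α * β * x - q) / (x * (x - 1) * (x - a)) := by
    rw [← neg_div_neg_eq]
    congr 1 <;> ring
  unfold SatisfiesHeun
  rw [hderiv₂, hderiv, hfirst, hzeroth, mul_neg, neg_mul]

theorem satisfiesHeun_rpow_mul_iff (hx : 0 < x) (hx1 : x ≠ 1) (hxa : x ≠ a)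
    (hv : ∀ᶠ t in 𝓝 x, DifferentiableAt ℝ v t) (hv' : DifferentiableAt ℝ (deriv v) x) :
    SatisfiesHeun a q α β γ δ (fun t => t ^ (1 - γ) * v t) x ↔
      SatisfiesHeun a (q + (1 - γ) * (a * δ + (α + β - γ - δ + 1)))
        (α - γ + 1) (β - γ + 1) (2 - γ) δ v x := by
  have hsub1 : x - 1 ≠ 0 := sub_ne_zero.2 hx1
  have hsuba : x - a ≠ 0 := sub_ne_zero.2 hxa
  have hfirst : 2 * (1 - γ) / x + (γ / x + δ / (x - 1) + (α + β - γ - δ + 1) / (x - a)) =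
      (2 - γ) / x + δ / (x - 1) +
        ((α - γ + 1) + (β - γ + 1) - (2 - γ) - δ + 1) / (x - a) := by ring
  have hzeroth : (1 - γ) * ((1 - γ) - 1) / x ^ 2 +
        (γ / x + δ / (x - 1) + (α + β - γ - δ + 1) / (x - a)) * ((1 - γ) / x) +
        (α * β * x - q) / (x * (x - 1) * (x - a)) =
      ((α - γ + 1) * (β - γ + 1) * x - (q + (1 - γ) * (a * δ + (α + β - γ - δ + 1)))) /
        (x * (x - 1) * (x - a)) := by
    field_simp
    ring
  unfold SatisfiesHeun
  rw [deriv_deriv_rpow_mul hx.ne' hv hv', deriv_rpow_mul hx.ne' hv.self_of_nhds, ← hfirst,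
    ← hzeroth]
  refine (Eq.congr_left ?_).trans (mul_eq_zero_iff_left (Real.rpow_pos_of_pos hx (1 - γ)).ne')
  ring

end Symmetries

theorem heun_transform_one_sub_x_pow_one_sub_delta_comp_one_sub_x_general
    {a q α β γ δ x : ℝ} (hx0 : x ≠ 0) (hx1 : x < 1) (hxa : x ≠ a) {v : ℝ → ℝ}
    (hv : ∀ᶠ t in 𝓝 (1 - x), DifferentiableAt ℝ v t)
    (hv' : DifferentiableAt ℝ (deriv v) (1 - x)) :
    SatisfiesHeun a q α β γ δ (fun x => (1 - x) ^ (1 - δ) * v (1 - x)) x ↔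
      SatisfiesHeun (1 - a) (-q + (δ - 1) * γ * a + (α - δ + 1) * (β - δ + 1))
        (α - δ + 1) (β - δ + 1) (2 - δ) γ v (1 - x) := by
  have haccessory : α * β - q + (1 - δ) * ((1 - a) * γ + (α + β - δ - γ + 1)) =
      -q + (δ - 1) * γ * a + (α - δ + 1) * (β - δ + 1) := by ring
  rw [satisfiesHeun_comp_one_sub_iff (v := fun t => t ^ (1 - δ) * v t),
    satisfiesHeun_rpow_mul_iff (sub_pos.2 hx1) (by simpa using hx0) (by simpa using hxa) hv hv',
    haccessory]

theorem heun_transform_one_sub_x_pow_one_sub_delta_comp_one_sub_x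
    (a q α β γ δ : ℝ) (ha0 : a ≠ 0) (ha1 : a ≠ 1)
    (l u : ℝ) (hsub : Set.Ioo l u ⊆ Set.Ioo (0 : ℝ) 1 \ {a})
    (v : ℝ → ℝ)
    (hv : ∀ t ∈ (fun x : ℝ => 1 - x) '' Set.Ioo l u,
      DifferentiableAt ℝ v t ∧ DifferentiableAt ℝ (deriv v) t)
    (hveq : ∀ t ∈ (fun x : ℝ => 1 - x) '' Set.Ioo l u,
      SatisfiesHeun (1 - a) (-q + (δ - 1) * γ * a + (α - δ + 1) * (β - δ + 1))
        (α - δ + 1) (β - δ + 1) (2 - δ) γ v t) :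
    ∀ x ∈ Set.Ioo l u,
      SatisfiesHeun a q α β γ δ (fun x => (1 - x) ^ (1 - δ) * v (1 - x)) x := by
  intro x hx
  have hmem : 1 - x ∈ (fun x : ℝ => 1 - x) '' Set.Ioo l u := ⟨x, hx, rfl⟩
  have hnhds : (fun x : ℝ => 1 - x) '' Set.Ioo l u ∈ 𝓝 (1 - x) := by
    rw [Set.image_const_sub_Ioo] at hmem ⊢
    exact isOpen_Ioo.mem_nhds hmem
  obtain ⟨⟨hx0, hx1⟩, hxa⟩ := hsub hx
  exact (heun_transform_one_sub_x_pow_one_sub_delta_comp_one_sub_x_general hx0.ne' hx1 hxa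
    (eventually_of_mem hnhds fun t ht => (hv t ht).1) (hv _ hmem).2).2 (hveq _ hmem)
end

section
/- Let a, q, α, β, γ, δ ∈ ℝ with a > 0, a ≠ 1, set ε := α + β − γ − δ + 1, and let I be an open interval with I ⊆ (0, min(1, a)). Suppose v : ℝ → ℝ is twice differentiable on J := {(1−a)x/(x−a) : x ∈ I} and satisfies Heun's differential equation with parameters (1 − a, −q + γ[(δ−1)a + β − δ + 1], −α + γ + 1, β − δ + 1, γ, 2 − δ) at every point of J. Then u(x) := (1−x)^{1−δ} (1 − x/a)^{−β+δ−1} · v((1−a)x/(x−a)) satisfies Heun's differential equation with parameters (a, q, α, β, γ, δ) at every x ∈ I. -/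
/-!
Write `u = w · (v ∘ φ)` with `w' = w g`. Then `u'' + p u' + r u` equals
`w · (φ'² v'' + (φ'' + 2 g φ' + p φ') v' + (g² + g' + p g + r) v)`, with `v` and its derivatives
taken at `φ`. So `v'' + P v' + R v = 0` at `φ x` gives `u'' + p u' + r u = 0` at `x` as soon as
`φ'' + 2 g φ' + p φ' = φ'² P(φ)` and `g² + g' + p g + r = φ'² R(φ)`.

Here `φ x = (1 - a) x / (x - a)` fixes `0` and `1`, sends `a` to `∞` and `∞` to `1 - a`, and the
powers in `w` correct the local exponents of `v ∘ φ`: at `1` from `{0, δ - 1}` to `{1 - δ, 0}`, at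
`a` from `{γ + 1 - α, β - δ + 1}` to `{1 - ε, 0}`, and at `∞` from `{0, α - β}` to `{β, α}`. Both
conditions then become identities between rational functions with poles in `{0, 1, a}`.
-/

open Filter Topology

section LiouvilleTransformation

variable {𝕜 : Type*} [NontriviallyNormedField 𝕜] {w φ v : 𝕜 → 𝕜} {x : 𝕜}

lemma hasDerivAt_mul_comp_of_hasDerivAt_mul_self {g φ' : 𝕜} (hw : HasDerivAt w (w x * g) x)
    (hφ : HasDerivAt φ φ' x) (hv : DifferentiableAt 𝕜 v (φ x)) :
    HasDerivAt (fun z ↦ w z * v (φ z)) (w x * (g * v (φ x) + φ' * deriv v (φ x))) x :=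
  (hw.mul (hv.hasDerivAt.comp x hφ)).congr_deriv (by simp only [Function.comp_apply]; ring)

variable {g φ' : 𝕜 → 𝕜} {dg φ'' : 𝕜}

lemma deriv_deriv_mul_comp_of_hasDerivAt_mul_self (hw : ∀ᶠ z in 𝓝 x, HasDerivAt w (w z * g z) z)
    (hg : HasDerivAt g dg x) (hφ : ∀ᶠ z in 𝓝 x, HasDerivAt φ (φ' z) z)
    (hφ' : HasDerivAt φ' φ'' x) (hv : ∀ᶠ z in 𝓝 x, DifferentiableAt 𝕜 v (φ z))
    (hv' : DifferentiableAt 𝕜 (deriv v) (φ x)) :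
    deriv (deriv fun z ↦ w z * v (φ z)) x =
      w x * (φ' x ^ 2 * deriv (deriv v) (φ x) + (φ'' + 2 * g x * φ' x) * deriv v (φ x)
        + (g x ^ 2 + dg) * v (φ x)) := by
  have first_deriv : deriv (fun z ↦ w z * v (φ z)) =ᶠ[𝓝 x]
      fun z ↦ w z * (g z * v (φ z) + φ' z * deriv v (φ z)) := by
    filter_upwards [hw, hφ, hv] with z hwz hφz hvz
    exact (hasDerivAt_mul_comp_of_hasDerivAt_mul_self hwz hφz hvz).deriv
  have hvφ := hv.self_of_nhds.hasDerivAt.comp x hφ.self_of_nhds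
  have hv'φ := hv'.hasDerivAt.comp x hφ.self_of_nhds
  rw [first_deriv.deriv_eq]
  refine (hw.self_of_nhds.mul ((hg.mul hvφ).add (hφ'.mul hv'φ))).deriv.trans ?_
  simp only [Pi.add_apply, Pi.mul_apply, Function.comp_apply]
  ring

lemma linear_ode_mul_comp {p r P R : 𝕜} (hw : ∀ᶠ z in 𝓝 x, HasDerivAt w (w z * g z) z)
    (hg : HasDerivAt g dg x) (hφ : ∀ᶠ z in 𝓝 x, HasDerivAt φ (φ' z) z)
    (hφ' : HasDerivAt φ' φ'' x) (hv : ∀ᶠ z in 𝓝 x, DifferentiableAt 𝕜 v (φ z))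
    (hv' : DifferentiableAt 𝕜 (deriv v) (φ x))
    (hP : φ'' + 2 * g x * φ' x + p * φ' x = φ' x ^ 2 * P)
    (hR : g x ^ 2 + dg + p * g x + r = φ' x ^ 2 * R)
    (hode : deriv (deriv v) (φ x) + P * deriv v (φ x) + R * v (φ x) = 0) :
    deriv (deriv fun z ↦ w z * v (φ z)) x + p * deriv (fun z ↦ w z * v (φ z)) x
      + r * (w x * v (φ x)) = 0 := by
  rw [deriv_deriv_mul_comp_of_hasDerivAt_mul_self hw hg hφ hφ' hv hv',
    (hasDerivAt_mul_comp_of_hasDerivAt_mul_self hw.self_of_nhds hφ.self_of_nhds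
      hv.self_of_nhds).deriv]
  linear_combination w x * deriv v (φ x) * hP + w x * v (φ x) * hR + w x * φ' x ^ 2 * hode

end LiouvilleTransformation

section Derivatives

lemma hasDerivAt_const_div_sub_pow {𝕜 : Type*} [NontriviallyNormedField 𝕜] {a x : 𝕜} (c : 𝕜)
    (n : ℕ) (hx : x ≠ a) :
    HasDerivAt (fun z ↦ c / (z - a) ^ n) (-(n * c) / (x - a) ^ (n + 1)) x := by
  have hxa : x - a ≠ 0 := sub_ne_zero.2 hx
  have hpow := ((hasDerivAt_id x).sub_const a).fun_pow n
  refine ((hasDerivAt_const x c).fun_div hpow (pow_ne_zero n hxa)).congr_deriv ?_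
  cases n with
  | zero => simp
  | succ n =>
    simp only [id_eq, Nat.add_sub_cancel]
    field_simp
    ring

lemma hasDerivAt_one_sub_div_rpow {c x : ℝ} (p : ℝ) (hc : c ≠ 0) (hx : x ≠ c) :
    HasDerivAt (fun z ↦ (1 - z / c) ^ p) ((1 - x / c) ^ p * (p / (x - c))) x := by
  have hxc : x - c ≠ 0 := sub_ne_zero.2 hx
  have hbase : 1 - x / c = -(x - c) / c := by field_simp; ring
  have hbase0 : 1 - x / c ≠ 0 := by rw [hbase]; exact div_ne_zero (neg_ne_zero.2 hxc) hc
  refine ((((hasDerivAt_id x).div_const c).const_sub 1).rpow_const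
    (p := p) (Or.inl hbase0)).congr_deriv ?_
  calc -(1 / c) * p * (1 - x / c) ^ (p - 1)
      = (1 - x / c) ^ p * (-(1 / c) * p / (1 - x / c)) := by
        rw [Real.rpow_sub_one hbase0]; ring
    _ = (1 - x / c) ^ p * (p / (x - c)) := by
        congr 1
        rw [hbase]
        field_simp

lemma hasDerivAt_one_sub_rpow_mul_one_sub_div_rpow {a x : ℝ} (p s : ℝ) (ha : a ≠ 0) (hx1 : x ≠ 1)
    (hxa : x ≠ a) :
    HasDerivAt (fun z ↦ (1 - z) ^ p * (1 - z / a) ^ s)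
      ((1 - x) ^ p * (1 - x / a) ^ s * (p / (x - 1) + s / (x - a))) x := by
  have h1 : HasDerivAt (fun z : ℝ ↦ (1 - z) ^ p) ((1 - x) ^ p * (p / (x - 1))) x := by
    simpa only [div_one] using hasDerivAt_one_sub_div_rpow p one_ne_zero hx1
  exact (h1.fun_mul (hasDerivAt_one_sub_div_rpow s ha hxa)).congr_deriv (by ring)

lemma hasDerivAt_div_sub_add_div_sub {𝕜 : Type*} [NontriviallyNormedField 𝕜] {b c x : 𝕜}
    (p s : 𝕜) (hb : x ≠ b) (hc : x ≠ c) :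
    HasDerivAt (fun z ↦ p / (z - b) + s / (z - c)) (-p / (x - b) ^ 2 + -s / (x - c) ^ 2) x := by
  simpa using (hasDerivAt_const_div_sub_pow p 1 hb).fun_add (hasDerivAt_const_div_sub_pow s 1 hc)

end Derivatives

/-- The coefficient of `y'` in Heun's equation with parameters `(a, q, α, β, γ, δ)`, which does not
depend on `q`. -/
noncomputable def heunFirstCoeff (a α β γ δ x : ℝ) : ℝ :=
  γ / x + δ / (x - 1) + (α + β - γ - δ + 1) / (x - a)

/-- The coefficient of `y` in Heun's equation with parameters `(a, q, α, β, γ, δ)`, which does not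
depend on `γ` and `δ`. -/
noncomputable def heunZerothCoeff (a q α β x : ℝ) : ℝ :=
  (α * β * x - q) / (x * (x - 1) * (x - a))

/-- The Möbius map with `0 ↦ 0`, `1 ↦ 1`, `a ↦ ∞` and `∞ ↦ 1 - a`; its value at the pole `a` is the
junk value `0`. -/
noncomputable def heunMobius (a x : ℝ) : ℝ :=
  (1 - a) * x / (x - a)

section Mobius

variable {a x : ℝ}

lemma hasDerivAt_heunMobius (hx : x ≠ a) :
    HasDerivAt (heunMobius a) (a * (a - 1) / (x - a) ^ 2) x := by
  refine (((hasDerivAt_id x).const_mul (1 - a)).fun_div ((hasDerivAt_id x).sub_const a)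
    (sub_ne_zero.2 hx)).congr_deriv ?_
  simp only [id_eq]
  ring

lemma heunMobius_sub_one (hx : x ≠ a) : heunMobius a x - 1 = -a * (x - 1) / (x - a) := by
  have hxa : x - a ≠ 0 := sub_ne_zero.2 hx
  unfold heunMobius
  field_simp
  ring

lemma heunMobius_sub_one_sub (hx : x ≠ a) :
    heunMobius a x - (1 - a) = a * (1 - a) / (x - a) := by
  have hxa : x - a ≠ 0 := sub_ne_zero.2 hx
  unfold heunMobius
  field_simp
  ring

variable (ha0 : a ≠ 0) (ha1 : a ≠ 1) (hx0 : x ≠ 0) (hx1 : x ≠ 1) (hxa : x ≠ a)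
include ha0 ha1 hx0 hx1 hxa

lemma deriv_heunMobius_mul_heunFirstCoeff (α β γ δ : ℝ) :
    a * (a - 1) / (x - a) ^ 2 * heunFirstCoeff (1 - a) α β γ δ (heunMobius a x) =
      γ / x + δ / (x - 1) - (α + β + 1) / (x - a) := by
  have h1a : 1 - a ≠ 0 := sub_ne_zero.2 ha1.symm
  have hx1' : x - 1 ≠ 0 := sub_ne_zero.2 hx1
  have hxa' : x - a ≠ 0 := sub_ne_zero.2 hxa
  rw [heunFirstCoeff, heunMobius_sub_one hxa, heunMobius_sub_one_sub hxa, heunMobius]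
  field_simp
  ring

lemma deriv_heunMobius_sq_mul_heunZerothCoeff (q α β : ℝ) :
    (a * (a - 1) / (x - a) ^ 2) ^ 2 * heunZerothCoeff (1 - a) q α β (heunMobius a x) =
      (q - α * β * heunMobius a x) / (x * (x - 1) * (x - a)) := by
  have h1a : 1 - a ≠ 0 := sub_ne_zero.2 ha1.symm
  have hx1' : x - 1 ≠ 0 := sub_ne_zero.2 hx1
  have hxa' : x - a ≠ 0 := sub_ne_zero.2 hxa
  rw [heunZerothCoeff, heunMobius_sub_one hxa, heunMobius_sub_one_sub hxa, heunMobius]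
  field_simp
  ring

lemma heunFirstCoeff_transform (α β γ δ : ℝ) :
    -(2 * (a * (a - 1))) / (x - a) ^ 3
        + 2 * ((1 - δ) / (x - 1) + (-β + δ - 1) / (x - a)) * (a * (a - 1) / (x - a) ^ 2)
        + heunFirstCoeff a α β γ δ x * (a * (a - 1) / (x - a) ^ 2) =
      (a * (a - 1) / (x - a) ^ 2) ^ 2 *
        heunFirstCoeff (1 - a) (-α + γ + 1) (β - δ + 1) γ (2 - δ) (heunMobius a x) := by
  have hxa' : x - a ≠ 0 := sub_ne_zero.2 hxa
  have second_deriv : -(2 * (a * (a - 1))) / (x - a) ^ 3 =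
      a * (a - 1) / (x - a) ^ 2 * (-2 / (x - a)) := by field_simp
  calc _ = a * (a - 1) / (x - a) ^ 2 *
          (γ / x + (2 - δ) / (x - 1) - (-α + γ + 1 + (β - δ + 1) + 1) / (x - a)) := by
        rw [second_deriv, heunFirstCoeff]
        ring
    _ = _ := by
        rw [← deriv_heunMobius_mul_heunFirstCoeff ha0 ha1 hx0 hx1 hxa]
        ring

lemma heunZerothCoeff_transform (q α β γ δ : ℝ) :
    ((1 - δ) / (x - 1) + (-β + δ - 1) / (x - a)) ^ 2
        + (-(1 - δ) / (x - 1) ^ 2 + -(-β + δ - 1) / (x - a) ^ 2)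
        + heunFirstCoeff a α β γ δ x * ((1 - δ) / (x - 1) + (-β + δ - 1) / (x - a))
        + heunZerothCoeff a q α β x =
      (a * (a - 1) / (x - a) ^ 2) ^ 2 *
        heunZerothCoeff (1 - a) (-q + γ * ((δ - 1) * a + β - δ + 1)) (-α + γ + 1) (β - δ + 1)
          (heunMobius a x) := by
  have hx1' : x - 1 ≠ 0 := sub_ne_zero.2 hx1
  have hxa' : x - a ≠ 0 := sub_ne_zero.2 hxa
  rw [deriv_heunMobius_sq_mul_heunZerothCoeff ha0 ha1 hx0 hx1 hxa, heunFirstCoeff,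
    heunZerothCoeff, heunMobius]
  field_simp
  ring

end Mobius

theorem heun_transform_powers_and_mobius_x_over_x_sub_a_general
    {a q α β γ δ x : ℝ} {v : ℝ → ℝ} (ha0 : a ≠ 0) (ha1 : a ≠ 1)
    (hx0 : x ≠ 0) (hx1 : x < 1) (hxa : x / a < 1)
    (hv : ∀ᶠ z in 𝓝 x, DifferentiableAt ℝ v ((1 - a) * z / (z - a)))
    (hv' : DifferentiableAt ℝ (deriv v) ((1 - a) * x / (x - a)))
    (hveq : SatisfiesHeun (1 - a) (-q + γ * ((δ - 1) * a + β - δ + 1))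
      (-α + γ + 1) (β - δ + 1) γ (2 - δ) v ((1 - a) * x / (x - a))) :
    SatisfiesHeun a q α β γ δ
      (fun z ↦ (1 - z) ^ (1 - δ) * (1 - z / a) ^ (-β + δ - 1)
        * v ((1 - a) * z / (z - a))) x := by
  have hx_ne_a : x ≠ a := by rintro rfl; exact hxa.ne (div_self ha0)
  have eventually_ne_a : ∀ᶠ z in 𝓝 x, z ≠ a := eventually_ne_nhds hx_ne_a
  have weight_deriv := (eventually_ne_nhds hx1.ne).and eventually_ne_a |>.mono fun z hz ↦
    hasDerivAt_one_sub_rpow_mul_one_sub_div_rpow (1 - δ) (-β + δ - 1) ha0 hz.1 hz.2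
  exact linear_ode_mul_comp weight_deriv
    (hasDerivAt_div_sub_add_div_sub (1 - δ) (-β + δ - 1) hx1.ne hx_ne_a)
    (eventually_ne_a.mono fun _ ↦ hasDerivAt_heunMobius)
    (hasDerivAt_const_div_sub_pow (a * (a - 1)) 2 hx_ne_a) hv hv'
    (heunFirstCoeff_transform ha0 ha1 hx0 hx1.ne hx_ne_a α β γ δ)
    (heunZerothCoeff_transform ha0 ha1 hx0 hx1.ne hx_ne_a q α β γ δ) hveq

theorem heun_transform_powers_and_mobius_x_over_x_sub_a
    (a q α β γ δ : ℝ) (ha0 : 0 < a) (ha1 : a ≠ 1)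
    (l u : ℝ) (hsub : Set.Ioo l u ⊆ Set.Ioo (0 : ℝ) (min 1 a))
    (v : ℝ → ℝ)
    (hv : ∀ t ∈ (fun x : ℝ => (1 - a) * x / (x - a)) '' Set.Ioo l u,
      DifferentiableAt ℝ v t ∧ DifferentiableAt ℝ (deriv v) t)
    (hveq : ∀ t ∈ (fun x : ℝ => (1 - a) * x / (x - a)) '' Set.Ioo l u,
      SatisfiesHeun (1 - a) (-q + γ * ((δ - 1) * a + β - δ + 1))
        (-α + γ + 1) (β - δ + 1) γ (2 - δ) v t) :
    ∀ x ∈ Set.Ioo l u,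
      SatisfiesHeun a q α β γ δ
        (fun x => (1 - x) ^ (1 - δ) * (1 - x / a) ^ (-β + δ - 1)
          * v ((1 - a) * x / (x - a))) x := by
  intro x hx
  obtain ⟨hx0, hx1, hxa⟩ : 0 < x ∧ x < 1 ∧ x < a := (hsub hx).imp_right lt_min_iff.1
  have hv_near : ∀ᶠ z in 𝓝 x, DifferentiableAt ℝ v ((1 - a) * z / (z - a)) :=
    eventually_of_mem (Ioo_mem_nhds hx.1 hx.2) fun z hz ↦ (hv _ ⟨z, hz, rfl⟩).1
  exact heun_transform_powers_and_mobius_x_over_x_sub_a_general ha0.ne' ha1 hx0.ne' hx1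
    ((div_lt_one ha0).2 hxa) hv_near (hv _ ⟨x, hx, rfl⟩).2 (hveq _ ⟨x, hx, rfl⟩)
end

section
/- Let a, q, α, β, γ, δ ∈ ℝ with a ∉ {0,1}, set ε := α + β − γ − δ + 1, and let I be an open interval with I ⊆ (0, ∞) \ {1, a}. Suppose v : ℝ → ℝ is twice differentiable on J := {(x−1)/x : x ∈ I} and satisfies Heun's differential equation with parameters ((a−1)/a, (−q + α(δa + β − δ))/a, α, α − γ + 1, δ, α − β + 1) at every point of J. Then u(x) := x^{−α} · v((x−1)/x) satisfies Heun's differential equation with parameters (a, q, α, β, γ, δ) at every x ∈ I. -/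
/-!
Put `t = (x - 1) / x`, so `dt/dx = x⁻²`. Differentiating `x ^ p * w t` gives a combination of
`x ^ (p - 1) * w t` and `x ^ (p - 2) * w' t`, two functions of the same shape, so the second
derivative of `x ^ (-α) * v t` comes from using this rule twice. Comparing the coefficients of
`v'' t`, `v' t` and `v t` then shows that the Heun operator in `x` applied to `x ^ (-α) * v t` is
`x ^ (-α) / x ^ 4` times the transformed Heun operator in `t` applied to `v`; the fourth exponent
parameter is the same for both.
-/

open Filter Topology

section Field

variable {K : Type*} [Field K] {a x : K}

theorem sub_one_div_sub_one (hx : x ≠ 0) : (x - 1) / x - 1 = -1 / x := by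
  field_simp
  ring

theorem sub_one_div_sub_sub_one_div (ha : a ≠ 0) (hx : x ≠ 0) :
    (x - 1) / x - (a - 1) / a = (x - a) / (a * x) := by
  field_simp
  ring

end Field

section Deriv

variable {𝕜 : Type*} [NontriviallyNormedField 𝕜] {x : 𝕜}

theorem hasStrictDerivAt_sub_one_div (hx : x ≠ 0) :
    HasStrictDerivAt (fun z : 𝕜 => (z - 1) / z) (x ^ 2)⁻¹ x := by
  have hid := hasStrictDerivAt_id x
  exact (HasStrictDerivAt.fun_div (hid.sub_const 1) hid hx).congr_deriv (by simp)

theorem image_sub_one_div_mem_nhds [CompleteSpace 𝕜] {s : Set 𝕜} (hx : x ≠ 0) (hs : s ∈ 𝓝 x) :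
    (fun z : 𝕜 => (z - 1) / z) '' s ∈ 𝓝 ((x - 1) / x) := by
  have hmap := (hasStrictDerivAt_sub_one_div hx).map_nhds_eq (inv_ne_zero (pow_ne_zero 2 hx))
  exact hmap ▸ image_mem_map hs

end Deriv

section RpowMulComp

variable {p x : ℝ} {v : ℝ → ℝ}

theorem rpow_sub_ofNat (hx : x ≠ 0) (n : ℕ) [n.AtLeastTwo] :
    x ^ (p - ofNat(n)) = x ^ p / x ^ (ofNat(n) : ℕ) :=
  Real.rpow_sub_natCast hx p n

theorem hasDerivAt_rpow_mul_comp_sub_one_div {w : ℝ → ℝ} {w' : ℝ} (hx : x ≠ 0)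
    (hw : HasDerivAt w w' ((x - 1) / x)) :
    HasDerivAt (fun z => z ^ p * w ((z - 1) / z))
      (p * (x ^ (p - 1) * w ((x - 1) / x)) + x ^ (p - 2) * w') x := by
  have hcomp : HasDerivAt (fun z => w ((z - 1) / z)) (w' * (x ^ 2)⁻¹) x :=
    HasDerivAt.comp (h := fun z => (z - 1) / z) x hw (hasStrictDerivAt_sub_one_div hx).hasDerivAt
  refine ((Real.hasDerivAt_rpow_const (Or.inl hx)).mul hcomp).congr_deriv ?_
  rw [rpow_sub_ofNat hx]
  ring

theorem deriv_rpow_mul_comp_sub_one_div (hx : x ≠ 0) (hv : DifferentiableAt ℝ v ((x - 1) / x)) :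
    deriv (fun z => z ^ p * v ((z - 1) / z)) x =
      p * (x ^ (p - 1) * v ((x - 1) / x)) + x ^ (p - 2) * deriv v ((x - 1) / x) :=
  (hasDerivAt_rpow_mul_comp_sub_one_div hx hv.hasDerivAt).deriv

theorem deriv_deriv_rpow_mul_comp_sub_one_div (hx : x ≠ 0)
    (hv : ∀ᶠ t in 𝓝 ((x - 1) / x), DifferentiableAt ℝ v t)
    (hv' : DifferentiableAt ℝ (deriv v) ((x - 1) / x)) :
    deriv (deriv fun z => z ^ p * v ((z - 1) / z)) x =
      p * (p - 1) * x ^ (p - 2) * v ((x - 1) / x)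
        + 2 * (p - 1) * x ^ (p - 3) * deriv v ((x - 1) / x)
        + x ^ (p - 4) * deriv (deriv v) ((x - 1) / x) := by
  have hderiv : deriv (fun z => z ^ p * v ((z - 1) / z)) =ᶠ[𝓝 x] fun z =>
      p * (z ^ (p - 1) * v ((z - 1) / z)) + z ^ (p - 2) * deriv v ((z - 1) / z) := by
    have hcont := (hasStrictDerivAt_sub_one_div hx).hasDerivAt.continuousAt
    filter_upwards [eventually_ne_nhds hx, hcont.eventually hv] with z hz hvz
    exact deriv_rpow_mul_comp_sub_one_div hz hvz
  have hfst := hasDerivAt_rpow_mul_comp_sub_one_div (p := p - 1) hx hv.self_of_nhds.hasDerivAt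
  have hsnd := hasDerivAt_rpow_mul_comp_sub_one_div (p := p - 2) hx hv'.hasDerivAt
  rw [hderiv.deriv_eq, ((hfst.const_mul p).fun_add hsnd).deriv]
  ring_nf

end RpowMulComp

/-- The coefficient of `y'` in Heun's equation, with `ε = α + β - γ - δ + 1` written out. -/
noncomputable def heunFirstOrderCoeff (a α β γ δ x : ℝ) : ℝ :=
  γ / x + δ / (x - 1) + (α + β - γ - δ + 1) / (x - a)

/-- The coefficient of `y` in Heun's equation. -/
noncomputable def heunZerothOrderCoeff (a q α β x : ℝ) : ℝ :=
  (α * β * x - q) / (x * (x - 1) * (x - a))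

/-- The Heun operator, the left-hand side of Heun's equation, applied to `y` and evaluated at
`x`. -/
noncomputable def heunOperator (a q α β γ δ : ℝ) (y : ℝ → ℝ) (x : ℝ) : ℝ :=
  deriv (deriv y) x + heunFirstOrderCoeff a α β γ δ x * deriv y x
    + heunZerothOrderCoeff a q α β x * y x

theorem satisfiesHeun_iff_heunOperator_eq_zero {a q α β γ δ x : ℝ} {y : ℝ → ℝ} :
    SatisfiesHeun a q α β γ δ y x ↔ heunOperator a q α β γ δ y x = 0 :=
  Iff.rfl

section Transform

variable {a q α β γ δ x : ℝ} {v : ℝ → ℝ}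

theorem heunFirstOrderCoeff_sub_one_div (ha : a ≠ 0) (hx : x ≠ 0) (hx1 : x ≠ 1) (hxa : x ≠ a) :
    heunFirstOrderCoeff ((a - 1) / a) α (α - γ + 1) δ (α - β + 1) ((x - 1) / x) =
      x ^ 2 * heunFirstOrderCoeff a α β γ δ x - 2 * (α + 1) * x := by
  have hx_sub_one : x - 1 ≠ 0 := sub_ne_zero.2 hx1
  have hx_sub_a : x - a ≠ 0 := sub_ne_zero.2 hxa
  simp only [heunFirstOrderCoeff, sub_one_div_sub_one hx, sub_one_div_sub_sub_one_div ha hx]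
  field_simp
  ring

theorem heunZerothOrderCoeff_sub_one_div (ha : a ≠ 0) (hx : x ≠ 0) (hx1 : x ≠ 1) (hxa : x ≠ a) :
    heunZerothOrderCoeff ((a - 1) / a) ((-q + α * (δ * a + β - δ)) / a) α (α - γ + 1)
        ((x - 1) / x) =
      x ^ 4 * heunZerothOrderCoeff a q α β x - α * x ^ 3 * heunFirstOrderCoeff a α β γ δ x
        + α * (α + 1) * x ^ 2 := by
  have hx_sub_one : x - 1 ≠ 0 := sub_ne_zero.2 hx1
  have hx_sub_a : x - a ≠ 0 := sub_ne_zero.2 hxa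
  simp only [heunZerothOrderCoeff, heunFirstOrderCoeff, sub_one_div_sub_one hx,
    sub_one_div_sub_sub_one_div ha hx]
  field_simp
  ring

theorem heunOperator_rpow_neg_mul_comp_sub_one_div (ha : a ≠ 0) (hx : x ≠ 0) (hx1 : x ≠ 1)
    (hxa : x ≠ a) (hv : ∀ᶠ t in 𝓝 ((x - 1) / x), DifferentiableAt ℝ v t)
    (hv' : DifferentiableAt ℝ (deriv v) ((x - 1) / x)) :
    heunOperator a q α β γ δ (fun z => z ^ (-α) * v ((z - 1) / z)) x =
      x ^ (-α) / x ^ 4 *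
        heunOperator ((a - 1) / a) ((-q + α * (δ * a + β - δ)) / a) α (α - γ + 1) δ (α - β + 1)
          v ((x - 1) / x) := by
  simp only [heunOperator]
  rw [heunFirstOrderCoeff_sub_one_div ha hx hx1 hxa,
    heunZerothOrderCoeff_sub_one_div ha hx hx1 hxa,
    deriv_deriv_rpow_mul_comp_sub_one_div hx hv hv',
    deriv_rpow_mul_comp_sub_one_div hx hv.self_of_nhds]
  simp only [Real.rpow_sub_one hx, rpow_sub_ofNat hx]
  field_simp
  ring

theorem heun_transform_x_pow_neg_alpha_comp_x_sub_one_over_x_general (ha : a ≠ 0) (hx : 0 < x)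
    (hx1 : x ≠ 1) (hxa : x ≠ a) (hv : ∀ᶠ t in 𝓝 ((x - 1) / x), DifferentiableAt ℝ v t)
    (hv' : DifferentiableAt ℝ (deriv v) ((x - 1) / x)) :
    SatisfiesHeun a q α β γ δ (fun z => z ^ (-α) * v ((z - 1) / z)) x ↔
      SatisfiesHeun ((a - 1) / a) ((-q + α * (δ * a + β - δ)) / a) α (α - γ + 1) δ (α - β + 1)
        v ((x - 1) / x) := by
  have hfactor : x ^ (-α) / x ^ 4 ≠ 0 := by positivity
  simp only [satisfiesHeun_iff_heunOperator_eq_zero,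
    heunOperator_rpow_neg_mul_comp_sub_one_div ha hx.ne' hx1 hxa hv hv', mul_eq_zero, hfactor,
    false_or]

end Transform

theorem heun_transform_x_pow_neg_alpha_comp_x_sub_one_over_x
    (a q α β γ δ : ℝ) (ha0 : a ≠ 0) (ha1 : a ≠ 1)
    (l u : ℝ) (hsub : Set.Ioo l u ⊆ {x : ℝ | 0 < x ∧ x ≠ 1 ∧ x ≠ a})
    (v : ℝ → ℝ)
    (hv : ∀ t ∈ (fun x : ℝ => (x - 1) / x) '' Set.Ioo l u,
      DifferentiableAt ℝ v t ∧ DifferentiableAt ℝ (deriv v) t)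
    (hveq : ∀ t ∈ (fun x : ℝ => (x - 1) / x) '' Set.Ioo l u,
      SatisfiesHeun ((a - 1) / a) ((-q + α * (δ * a + β - δ)) / a)
        α (α - γ + 1) δ (α - β + 1) v t) :
    ∀ x ∈ Set.Ioo l u,
      SatisfiesHeun a q α β γ δ (fun x => x ^ (-α) * v ((x - 1) / x)) x := by
  intro x hx
  obtain ⟨hx0, hx1, hxa⟩ := hsub hx
  have hmem : (x - 1) / x ∈ (fun x : ℝ => (x - 1) / x) '' Set.Ioo l u := ⟨x, hx, rfl⟩
  have hJ := image_sub_one_div_mem_nhds hx0.ne' (isOpen_Ioo.mem_nhds hx)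
  have hvJ := mem_of_superset hJ fun t ht => (hv t ht).1
  exact (heun_transform_x_pow_neg_alpha_comp_x_sub_one_over_x_general ha0 hx0 hx1 hxa hvJ
    (hv _ hmem).2).2 (hveq _ hmem)
end
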